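/- If (K,c) ∉ D₁ ∪ D₂ (with K ≠ 0), then for every μ ∈ ℝ the system (TV) has no nonconstant periodic solution with u > 0. Moreover, under condition (C), for (K,c) ∈ D₁ ∪ D₂ and a fixed q in the admissible interval ((u₁,u₀) when (K,c) ∈ D₁ with μ_b ≥ μ_f; (u₀,u₂) when (K,c) ∈ D₁ with μ_b < μ_f or (K,c) ∈ D₂), there is at most one value of μ for which (TV) has a nonconstant periodic solution with initial condition (u(0),w(0)) = (q,0): if μ ≠ μ_per(K,c,q), no such periodic solution exists. -/

import Mathlib

open Set Filter MeasureTheory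

noncomputable section

namespace TrafficTW

/-- `f(u) = (K u - V(u) - c)/K`. -/
def fTV (V : ℝ → ℝ) (K c u : ℝ) : ℝ := (K * u - V u - c) / K

/-- `f'(u) = (K - V'(u))/K`. -/
def fdTV (V' : ℝ → ℝ) (K u : ℝ) : ℝ := (K - V' u) / K

/-- `h(u,μ) = f'(u) + μ`. -/
def hTV (V' : ℝ → ℝ) (K μ u : ℝ) : ℝ := fdTV V' K u + μ

/-- `g₁(u) = 1/(τ κ(1/u))`. -/
def g1TV (κ : ℝ → ℝ) (τ u : ℝ) : ℝ := 1 / (τ * κ (1 / u))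

/-- `g₂(u) = u/(2 τ κ(1/u))`. -/
def g2TV (κ : ℝ → ℝ) (τ u : ℝ) : ℝ := u / (2 * τ * κ (1 / u))

/-- The traveling-wave system (TV): `u' = w`, `w' = g₁ f + g₂ h w`. -/
def IsTVSol (V V' κ : ℝ → ℝ) (τ K c μ : ℝ) (u w : ℝ → ℝ) : Prop :=
  (∀ z, HasDerivAt u (w z) z) ∧
  (∀ z, HasDerivAt w
    (g1TV κ τ (u z) * fTV V K c (u z) + g2TV κ τ (u z) * hTV V' K μ (u z) * w z) z)

/-- Assumption (A1), where `V'` and `V''` are the first and second derivatives of `V`. -/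
def A1 (V V' V'' : ℝ → ℝ) (UM : ℝ) : Prop :=
  (∀ u ∈ Ici (0:ℝ), HasDerivWithinAt V (V' u) (Ici 0) u) ∧
  ContinuousOn V' (Ici 0) ∧
  (∀ u ∈ Ioi (0:ℝ), HasDerivAt V' (V'' u) u) ∧
  ContinuousOn V'' (Ioi 0) ∧
  (∀ u, 0 < u → 0 < V' u) ∧ (∃ M, ∀ u, 0 < u → V' u ≤ M) ∧
  Tendsto V' atTop (nhds 0) ∧
  0 < UM ∧ (∀ u, 0 < u → V' u ≤ V' UM) ∧
  (∀ u, 0 < u → (V'' u = 0 ↔ u = UM))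

/-- Assumption (A2). -/
def A2 (κ : ℝ → ℝ) : Prop :=
  ContDiffOn ℝ 1 κ (Ioi 0) ∧ ∀ ρ, 0 < ρ → 0 < κ ρ

/-- `c₀ = -V(0)`. -/
def c0v (V : ℝ → ℝ) : ℝ := - V 0

/-- `c_M(K) = K u_M(K) - V(u_M(K))`, where `uMx` is the function `K ↦ u_M(K)`. -/
def cMf (V : ℝ → ℝ) (uMx : ℝ → ℝ) (K : ℝ) : ℝ := K * uMx K - V (uMx K)

/-- `c_m(K) = K u_m(K) - V(u_m(K))`, where `umx` is the function `K ↦ u_m(K)`. -/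
def cmf (V : ℝ → ℝ) (umx : ℝ → ℝ) (K : ℝ) : ℝ := K * umx K - V (umx K)

/-- `c₁(K) = max (c₀, c_m(K))`. -/
def c1f (V : ℝ → ℝ) (umx : ℝ → ℝ) (K : ℝ) : ℝ := max (c0v V) (cmf V umx K)

/-- `uMx K = u_M(K)` is the unique local maximum point of `u ↦ K u - V(u)`, characterized
by `u_M(K) ∈ (0, U_M)` and `V'(u_M(K)) = K`, for `K ∈ (K₀, K_M)`. -/
def UMaxHyp (V' : ℝ → ℝ) (UM : ℝ) (uMx : ℝ → ℝ) : Prop :=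
  ∀ K, V' 0 < K → K < V' UM → uMx K ∈ Ioo 0 UM ∧ V' (uMx K) = K

/-- `umx K = u_m(K)` is the unique local minimum point of `u ↦ K u - V(u)`, characterized
by `u_m(K) ∈ (U_M, ∞)` and `V'(u_m(K)) = K`, for `K ∈ (0, K_M)`. -/
def UMinHyp (V' : ℝ → ℝ) (UM : ℝ) (umx : ℝ → ℝ) : Prop :=
  ∀ K, 0 < K → K < V' UM → UM < umx K ∧ V' (umx K) = K

/-- Characterization of `K₁ ∈ (K₀, K_M)`: `c_m(K) < c₀` for `K < K₁` and `c_m(K) > c₀`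
for `K > K₁`. -/
def K1Hyp (V V' : ℝ → ℝ) (UM : ℝ) (umx : ℝ → ℝ) (K₁ : ℝ) : Prop :=
  V' 0 < K₁ ∧ K₁ < V' UM ∧
  (∀ K, 0 < K → K < K₁ → cmf V umx K < c0v V) ∧
  cmf V umx K₁ = c0v V ∧
  (∀ K, K₁ < K → K < V' UM → c0v V < cmf V umx K)

/-- The parameter region `D₁`. -/
def D1 (V V' : ℝ → ℝ) (UM : ℝ) (uMx umx : ℝ → ℝ) : Set (ℝ × ℝ) :=
  {p | V' 0 < p.1 ∧ p.1 < V' UM ∧ c1f V umx p.1 < p.2 ∧ p.2 < cMf V uMx p.1}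

/-- The parameter region `D₂`. -/
def D2 (V V' : ℝ → ℝ) (umx : ℝ → ℝ) (K₁ : ℝ) : Set (ℝ × ℝ) :=
  {p | (V' 0 < p.1 ∧ p.1 < K₁ ∧ p.2 = c0v V) ∨
       (0 < p.1 ∧ p.1 < K₁ ∧ cmf V umx p.1 < p.2 ∧ p.2 < c0v V)}

/-- For `(K,c) ∈ D₁`: `u₁ < u₀ < u₂` are the exactly three positive zeros of `f`. -/
def ZerosD1 (V : ℝ → ℝ) (K c u1 u0 u2 : ℝ) : Prop :=
  0 < u1 ∧ u1 < u0 ∧ u0 < u2 ∧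
  fTV V K c u1 = 0 ∧ fTV V K c u0 = 0 ∧ fTV V K c u2 = 0 ∧
  ∀ u, 0 < u → fTV V K c u = 0 → u = u1 ∨ u = u0 ∨ u = u2

/-- For `(K,c) ∈ D₂`: `u₀ < u₂` are the exactly two positive zeros of `f`. -/
def ZerosD2 (V : ℝ → ℝ) (K c u0 u2 : ℝ) : Prop :=
  0 < u0 ∧ u0 < u2 ∧ fTV V K c u0 = 0 ∧ fTV V K c u2 = 0 ∧
  ∀ u, 0 < u → fTV V K c u = 0 → u = u0 ∨ u = u2

/-- Condition (HE1). -/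
def HE1 (u1 u2 : ℝ) (u w : ℝ → ℝ) : Prop :=
  Tendsto u atBot (nhds u1) ∧ Tendsto u atTop (nhds u2) ∧
  Tendsto w atBot (nhds 0) ∧ Tendsto w atTop (nhds 0) ∧ ∀ z, 0 < w z

/-- Condition (HE2). -/
def HE2 (u1 u2 : ℝ) (u w : ℝ → ℝ) : Prop :=
  Tendsto u atBot (nhds u2) ∧ Tendsto u atTop (nhds u1) ∧
  Tendsto w atBot (nhds 0) ∧ Tendsto w atTop (nhds 0) ∧ ∀ z, w z < 0

/-- Condition (HO) with level `ub`. -/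
def HO (ub : ℝ) (u w : ℝ → ℝ) : Prop :=
  Tendsto u atBot (nhds ub) ∧ Tendsto u atTop (nhds ub) ∧
  Tendsto w atBot (nhds 0) ∧ Tendsto w atTop (nhds 0) ∧
  ¬ (∀ z, u z = ub ∧ w z = 0)

/-- (TV) with parameter `μ` has a positive solution satisfying (HE1). -/
def HasHE1 (V V' κ : ℝ → ℝ) (τ K c μ u1 u2 : ℝ) : Prop :=
  ∃ u w : ℝ → ℝ, IsTVSol V V' κ τ K c μ u w ∧ (∀ z, 0 < u z) ∧ HE1 u1 u2 u w

/-- (TV) with parameter `μ` has a positive solution satisfying (HE2). -/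
def HasHE2 (V V' κ : ℝ → ℝ) (τ K c μ u1 u2 : ℝ) : Prop :=
  ∃ u w : ℝ → ℝ, IsTVSol V V' κ τ K c μ u w ∧ (∀ z, 0 < u z) ∧ HE2 u1 u2 u w

/-- (TV) with parameter `μ` has a positive solution satisfying (HO) with level `ub`. -/
def HasHO (V V' κ : ℝ → ℝ) (τ K c μ ub : ℝ) : Prop :=
  ∃ u w : ℝ → ℝ, IsTVSol V V' κ τ K c μ u w ∧ (∀ z, 0 < u z) ∧ HO ub u w

/-- Condition (H): `∫₁^∞ dρ/(ρ³ κ(ρ)) = ∞`. -/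
def CondH (κ : ℝ → ℝ) : Prop :=
  ¬ IntegrableOn (fun ρ => 1 / (ρ ^ 3 * κ ρ)) (Ioi 1)

/-- Condition (C). -/
def CondC (V' κ : ℝ → ℝ) (UM K₁ K : ℝ) : Prop :=
  (K₁ < K ∧ K < V' UM) ∨ (CondH κ ∧ V' 0 < K ∧ K ≤ K₁)

/-- Periodic solution. -/
def IsPeriodicSol (u w : ℝ → ℝ) : Prop :=
  ∃ Z, 0 < Z ∧ ∀ z, u (z + Z) = u z ∧ w (z + Z) = w z

/-- Nonconstant pair of functions. -/
def Nonconst (u w : ℝ → ℝ) : Prop := ∃ z, u z ≠ u 0 ∨ w z ≠ w 0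

/-- Discriminant of the Jacobian at an equilibrium `(u,0)`. -/
def discTV (V' κ : ℝ → ℝ) (τ K u μ : ℝ) : ℝ :=
  (g2TV κ τ u) ^ 2 * (hTV V' K μ u) ^ 2 + 4 * g1TV κ τ u * fdTV V' K u

/-- The eigenvalue `λ₊(u)`. -/
def lamP (V' κ : ℝ → ℝ) (τ K u μ : ℝ) : ℝ :=
  (g2TV κ τ u * hTV V' K μ u + Real.sqrt (discTV V' κ τ K u μ)) / 2

/-- The eigenvalue `λ₋(u)`. -/
def lamM (V' κ : ℝ → ℝ) (τ K u μ : ℝ) : ℝ :=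
  (g2TV κ τ u * hTV V' K μ u - Real.sqrt (discTV V' κ τ K u μ)) / 2

/-- `Z` is the minimal period of `(u,w)`. -/
def IsMinPeriod (u w : ℝ → ℝ) (Z : ℝ) : Prop :=
  0 < Z ∧ (∀ z, u (z + Z) = u z ∧ w (z + Z) = w z) ∧
  ∀ Z', 0 < Z' → (∀ z, u (z + Z') = u z ∧ w (z + Z') = w z) → Z ≤ Z'

/-!
Write (TV) as `u' = w`, `w' = A(u) + B(u) w` with `A = g₁ f` and `B = g₂ h`. On the range of a
periodic orbit `A` changes sign once, from `+` to `-`: otherwise the mean value theorem would put a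
value of `V'` below `K` between two values above `K`, but `V'` has no interior local minimum. The
orbit then has exactly two turning values `a < b` (values of `u` where `w = 0`), and consists of an
upper and a lower arc between them, each the graph of a solution of `dW/du = A / W + B`.

Raising `μ` raises `B`. Where `A ≥ 0`, a curve with larger `B` that starts at the same point or
further left stays strictly above, and where `A ≤ 0` the same comparison runs backwards from the
right end point. Upper arcs ordered at the left end are therefore strictly ordered at the right
end, and lower arcs ordered at the right end are strictly ordered at the left end, so orbits for
different `μ` share no turning value.

Moreover `f(a) > 0 > f(b)` at the turning values of a periodic orbit, and comparing `K u - V(u)`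
at `a` and `b` with its extrema `c_M(K)`, `c_m(K)` and its value `c₀` at `0` puts `(K, c)` in
`D₁ ∪ D₂`.
-/

section Calculus

open Topology

lemma nonpos_of_hasDerivAt_of_le_left {f : ℝ → ℝ} {d a y : ℝ} (hf : HasDerivAt f d y)
    (hay : a < y) (hmin : ∀ x ∈ Ioo a y, f y ≤ f x) : d ≤ 0 := by
  refine le_of_tendsto (hasDerivWithinAt_iff_tendsto_slope' (s := Iio y) self_notMem_Iio |>.1
    hf.hasDerivWithinAt) ?_
  filter_upwards [Ioo_mem_nhdsLT hay] with x hx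
  rw [slope_def_field]
  exact div_nonpos_of_nonneg_of_nonpos (sub_nonneg.2 (hmin x hx)) (sub_nonpos.2 hx.2.le)

lemma exists_first_zero {w : ℝ → ℝ} (hw : Continuous w) {s e : ℝ} (hse : s < e)
    (hpos : ∀ᶠ z in 𝓝[>] s, 0 < w z) (he : w e ≤ 0) :
    ∃ t, s < t ∧ w t = 0 ∧ ∀ z ∈ Ioo s t, 0 < w z := by
  obtain ⟨m, hsm, hm⟩ := mem_nhdsGT_iff_exists_Ioc_subset.1 hpos
  have hme : m < e := by
    by_contra! hem
    exact he.not_gt (hm ⟨hse, hem⟩)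
  obtain ⟨t, ⟨⟨hmt, -⟩, hwt⟩, hleast⟩ :=
    (isCompact_Icc.inter_right (isClosed_le hw continuous_const)).exists_isLeast
      (⟨e, ⟨hme.le, le_rfl⟩, he⟩ : (Icc m e ∩ {z | w z ≤ 0}).Nonempty)
  have hst : s < t := hsm.trans_le hmt
  have hpos_t : ∀ z ∈ Ioo s t, 0 < w z := by
    intro z hz
    rcases le_total z m with hzm | hmz
    · exact hm ⟨hz.1, hzm⟩
    · by_contra! hwz
      have hze : z ≤ e := hz.2.le.trans (hleast ⟨⟨hme.le, le_rfl⟩, he⟩)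
      exact hz.2.not_ge (hleast ⟨⟨hmz, hze⟩, hwz⟩)
  refine ⟨t, hst, le_antisymm hwt ?_, hpos_t⟩
  refine ge_of_tendsto (hw.continuousWithinAt (s := Iio t)).tendsto ?_
  filter_upwards [Ioo_mem_nhdsLT hst] with z hz using (hpos_t z hz).le

lemma continuousOn_invFunOn_image {X Y : Type*} [TopologicalSpace X] [Nonempty X]
    [TopologicalSpace Y] [T2Space Y] {f : X → Y} {s : Set X} (hs : IsCompact s)
    (hf : ContinuousOn f s) (hinj : InjOn f s) :
    ContinuousOn (Function.invFunOn f s) (f '' s) := by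
  rw [continuousOn_iff_isClosed]
  intro C hC
  refine ⟨f '' (s ∩ C), ((hs.inter_right hC).image_of_continuousOn
    (hf.mono inter_subset_left)).isClosed, ?_⟩
  ext y
  constructor
  · rintro ⟨hyC, x, hx, rfl⟩
    rw [mem_preimage, hinj.leftInvOn_invFunOn hx] at hyC
    exact ⟨⟨x, ⟨hx, hyC⟩, rfl⟩, x, hx, rfl⟩
  · rintro ⟨⟨x, ⟨hx, hxC⟩, rfl⟩, hy⟩
    exact ⟨by rwa [mem_preimage, hinj.leftInvOn_invFunOn hx], hy⟩

lemma contDiffOn_one_of_hasDerivAt {f f' : ℝ → ℝ} {U : Set ℝ} (hU : IsOpen U)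
    (hf : ∀ x ∈ U, HasDerivAt f (f' x) x) (hf' : ContinuousOn f' U) : ContDiffOn ℝ 1 f U := by
  rw [contDiffOn_one_iff_derivWithin hU.uniqueDiffOn]
  refine ⟨fun x hx => (hf x hx).differentiableAt.differentiableWithinAt, hf'.congr fun x hx => ?_⟩
  rw [derivWithin_of_isOpen hU hx, (hf x hx).deriv]

lemma eq_of_isIntegralCurve_of_contDiffAt {E : Type*} [NormedAddCommGroup E] [NormedSpace ℝ E]
    {v : E → E} {γ₁ γ₂ : ℝ → E} (hv : ∀ t, ContDiffAt ℝ 1 v (γ₁ t))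
    (h₁ : IsIntegralCurve γ₁ fun _ => v) (h₂ : IsIntegralCurve γ₂ fun _ => v) {t₀ : ℝ}
    (heq : γ₁ t₀ = γ₂ t₀) : γ₁ = γ₂ := by
  suffices h : {t | γ₁ t = γ₂ t} = univ from funext fun t => h.ge (mem_univ t)
  refine IsClopen.eq_univ ⟨isClosed_eq h₁.continuous h₂.continuous, ?_⟩ ⟨t₀, heq⟩
  refine isOpen_iff_mem_nhds.2 fun t (ht : γ₁ t = γ₂ t) => ?_
  obtain ⟨L, s, hs, hL⟩ := (hv t).exists_lipschitzOnWith
  exact ODE_solution_unique_of_eventually (.of_forall fun _ => hL)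
    ((h₁.continuous.continuousAt.eventually_mem hs).mono fun r hr => ⟨h₁ r, hr⟩)
    ((h₂.continuous.continuousAt.eventually_mem (ht ▸ hs)).mono fun r hr => ⟨h₂ r, hr⟩) ht

end Calculus

section PhaseCurve

/-- A positive arc of an orbit of `u' = w`, `w' = A(u) + B(u) w` over the interval `[a, b]` between
two consecutive turning values, written as a graph `w = W(u)`. -/
structure PhaseCurve (A B W : ℝ → ℝ) (a b : ℝ) : Prop where
  lt : a < b
  continuousOn : ContinuousOn W (Icc a b)
  left_eq_zero : W a = 0
  right_eq_zero : W b = 0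
  pos : ∀ x ∈ Ioo a b, 0 < W x
  hasDerivAt : ∀ x ∈ Ioo a b, HasDerivAt W (A x / W x + B x) x

/-- A sign change of `A` from `+` to `-` at `p`, relative to `s` and in the weak sense that `A` may
also vanish elsewhere; this is what makes phase curves comparable. -/
def CrossesDownOn (A : ℝ → ℝ) (p : ℝ) (s : Set ℝ) : Prop :=
  ∀ x ∈ s, (x ≤ p → 0 ≤ A x) ∧ (p ≤ x → A x ≤ 0)

variable {A B B₁ B₂ W W₁ W₂ : ℝ → ℝ} {a b a₁ b₁ a₂ b₂ p : ℝ} {s t : Set ℝ}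

lemma CrossesDownOn.mono (h : CrossesDownOn A p t) (hst : s ⊆ t) : CrossesDownOn A p s :=
  fun x hx => h x (hst hx)

lemma CrossesDownOn.reflect (h : CrossesDownOn A p s) :
    CrossesDownOn (fun x => -A (-x)) (-p) (-s) := fun x hx =>
  ⟨fun hxp => neg_nonneg.2 ((h (-x) hx).2 (le_neg.1 hxp)),
    fun hpx => neg_nonpos.2 ((h (-x) hx).1 (neg_le.1 hpx))⟩

lemma CrossesDownOn.lt_of_pos (h : CrossesDownOn A p s) {x : ℝ} (hx : x ∈ s) (hA : 0 < A x) :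
    x < p :=
  not_le.1 fun hpx => hA.not_ge ((h x hx).2 hpx)

lemma CrossesDownOn.lt_of_neg (h : CrossesDownOn A p s) {x : ℝ} (hx : x ∈ s) (hA : A x < 0) :
    p < x :=
  not_le.1 fun hxp => hA.not_ge ((h x hx).1 hxp)

namespace PhaseCurve

lemma reflect (h : PhaseCurve A B W a b) :
    PhaseCurve (fun x => -A (-x)) (fun x => -B (-x)) (fun x => W (-x)) (-b) (-a) where
  lt := neg_lt_neg h.lt
  continuousOn := h.continuousOn.comp continuousOn_neg fun _ hx => ⟨le_neg.1 hx.2, neg_le.1 hx.1⟩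
  left_eq_zero := by simpa using h.right_eq_zero
  right_eq_zero := by simpa using h.left_eq_zero
  pos x hx := h.pos (-x) ⟨lt_neg.1 hx.2, neg_lt.1 hx.1⟩
  hasDerivAt x hx := by
    refine ((h.hasDerivAt (-x) ⟨lt_neg.1 hx.2, neg_lt.1 hx.1⟩).comp x
      (hasDerivAt_neg x)).congr_deriv ?_
    ring

lemma nonneg (h : PhaseCurve A B W a b) {x : ℝ} (hx : x ∈ Icc a b) : 0 ≤ W x := by
  rcases eq_or_lt_of_le hx.1 with rfl | hax
  · exact h.left_eq_zero.ge
  rcases eq_or_lt_of_le hx.2 with rfl | hxb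
  · exact h.right_eq_zero.ge
  exact (h.pos x ⟨hax, hxb⟩).le

lemma exists_pos_hasDerivAt_sub (h₁ : PhaseCurve A B₁ W₁ a₁ b₁) (h₂ : PhaseCurve A B₂ W₂ a₂ b₂)
    {x : ℝ} (hx₁ : x ∈ Ioo a₁ b₁) (hx₂ : x ∈ Ioo a₂ b₂) (hA : 0 ≤ A x) (hB : B₁ x < B₂ x)
    (hW : W₂ x ≤ W₁ x) : ∃ d, 0 < d ∧ HasDerivAt (fun y => W₂ y - W₁ y) d x := by
  refine ⟨_, ?_, (h₂.hasDerivAt x hx₂).sub (h₁.hasDerivAt x hx₁)⟩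
  have : A x / W₁ x ≤ A x / W₂ x := div_le_div_of_nonneg_left hA (h₂.pos x hx₂) hW
  linarith

lemma lt_at_crossing (h₁ : PhaseCurve A B₁ W₁ a₁ b₁) (h₂ : PhaseCurve A B₂ W₂ a₂ b₂)
    (ha : a₂ ≤ a₁) (hp₁ : p ∈ Ioo a₁ b₁) (hp₂ : p < b₂) (hA : ∀ x ∈ Ioc a₁ p, 0 ≤ A x)
    (hB : ∀ x ∈ Ioc a₁ p, B₁ x < B₂ x) : W₁ p < W₂ p := by
  set D : ℝ → ℝ := fun x => W₂ x - W₁ x with hD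
  by_contra! hle
  have hDp : D p ≤ 0 := sub_nonpos.2 hle
  have hDa : 0 ≤ D a₁ := by
    simpa only [hD, h₁.left_eq_zero, sub_zero] using h₂.nonneg ⟨ha, (hp₁.1.trans hp₂).le⟩
  have hDcont : ContinuousOn D (Icc a₁ p) :=
    (h₂.continuousOn.mono (Icc_subset_Icc ha hp₂.le)).sub
      (h₁.continuousOn.mono (Icc_subset_Icc_right hp₁.2.le))
  obtain ⟨y, hy, hDy, hmin⟩ : ∃ y ∈ Ioc a₁ p, D y ≤ 0 ∧ ∀ x ∈ Icc a₁ p, D y ≤ D x := by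
    obtain ⟨y, hy, hmin⟩ := isCompact_Icc.exists_isMinOn (nonempty_Icc.2 hp₁.1.le) hDcont
    have hyp : D y ≤ D p := hmin (right_mem_Icc.2 hp₁.1.le)
    rcases eq_or_lt_of_le hy.1 with rfl | hay
    · exact ⟨p, right_mem_Ioc.2 hp₁.1, hDp, fun x hx => (hDp.trans hDa).trans (hmin hx)⟩
    · exact ⟨y, ⟨hay, hy.2⟩, hyp.trans hDp, fun x hx => hmin hx⟩
  obtain ⟨d, hd, hderiv⟩ := h₁.exists_pos_hasDerivAt_sub h₂ ⟨hy.1, hy.2.trans_lt hp₁.2⟩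
    ⟨ha.trans_lt hy.1, hy.2.trans_lt hp₂⟩ (hA y hy) (hB y hy) (sub_nonpos.1 hDy)
  exact hd.not_ge (nonpos_of_hasDerivAt_of_le_left hderiv hy.1 fun x hx =>
    hmin x ⟨hx.1.le, hx.2.le.trans hy.2⟩)

theorem right_lt_of_left_le (h₁ : PhaseCurve A B₁ W₁ a₁ b₁) (h₂ : PhaseCurve A B₂ W₂ a₂ b₂)
    (hp₁ : p ∈ Ioo a₁ b₁) (hp₂ : p ∈ Ioo a₂ b₂) (hA : CrossesDownOn A p (Ioo a₁ b₁))
    (hB : ∀ x ∈ Ioo a₁ b₁, B₁ x < B₂ x) (ha : a₂ ≤ a₁) : b₁ < b₂ := by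
  by_contra! hb
  have hlt : W₁ p < W₂ p :=
    h₁.lt_at_crossing h₂ ha hp₁ hp₂.2 (fun x hx => (hA x ⟨hx.1, hx.2.trans_lt hp₁.2⟩).1 hx.2)
      fun x hx => hB x ⟨hx.1, hx.2.trans_lt hp₁.2⟩
  have hmem : ∀ x ∈ Ioc (-b₂) (-p), -x ∈ Ioo a₁ b₁ := fun x hx =>
    ⟨hp₁.1.trans_le (le_neg.1 hx.2), (neg_lt.1 hx.1).trans_le hb⟩
  have hgt := h₂.reflect.lt_at_crossing h₁.reflect (neg_le_neg hb)
    ⟨neg_lt_neg hp₂.2, neg_lt_neg hp₂.1⟩ (neg_lt_neg hp₁.1)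
    (fun x hx => neg_nonneg.2 ((hA (-x) (hmem x hx)).2 (le_neg.1 hx.2)))
    fun x hx => neg_lt_neg (hB (-x) (hmem x hx))
  simp only [neg_neg] at hgt
  exact hlt.asymm hgt

end PhaseCurve

/-- A closed orbit of `u' = w`, `w' = A(u) + B(u) w` with exactly two turning values `a < b`. The
lower arc is recorded through the symmetry `(u, w) ↦ (-u, -w)`, which makes it an upper arc. -/
structure ClosedPhaseCurve (A B : ℝ → ℝ) (a b : ℝ) : Prop where
  upper : ∃ W, PhaseCurve A B W a b
  lower : ∃ W, PhaseCurve (fun x => -A (-x)) (fun x => B (-x)) W (-b) (-a)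

theorem ClosedPhaseCurve.nested (h₁ : ClosedPhaseCurve A B₁ a₁ b₁)
    (h₂ : ClosedPhaseCurve A B₂ a₂ b₂) (hp₁ : p ∈ Ioo a₁ b₁) (hp₂ : p ∈ Ioo a₂ b₂)
    (hA : CrossesDownOn A p (Ioo a₁ b₁)) (hB : ∀ x ∈ Ioo a₁ b₁, B₁ x < B₂ x) :
    (a₂ ≤ a₁ → b₁ < b₂) ∧ (b₁ ≤ b₂ → a₂ < a₁) := by
  obtain ⟨⟨W₁, hW₁⟩, L₁, hL₁⟩ := h₁
  obtain ⟨⟨W₂, hW₂⟩, L₂, hL₂⟩ := h₂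
  refine ⟨hW₁.right_lt_of_left_le hW₂ hp₁ hp₂ hA hB, fun hb => neg_lt_neg_iff.1 ?_⟩
  exact hL₁.right_lt_of_left_le hL₂ ⟨neg_lt_neg hp₁.2, neg_lt_neg hp₁.1⟩
    ⟨neg_lt_neg hp₂.2, neg_lt_neg hp₂.1⟩ (neg_Ioo a₁ b₁ ▸ hA.reflect)
    (fun x hx => hB (-x) ⟨lt_neg.1 hx.2, neg_lt.1 hx.1⟩) (neg_le_neg hb)

end PhaseCurve

section Lienard

open Topology

/-- A periodic orbit of the Liénard system `u' = w`, `w' = A(u) + B(u) w`, together with the two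
consequences of uniqueness of solutions used in the phase plane: the state `(u, w)` determines the
rest of the trajectory, and the orbit avoids the equilibria `(u, 0)`, `A(u) = 0`. -/
structure LienardCycle (A B u w : ℝ → ℝ) : Prop where
  hasDerivAt_u : ∀ z, HasDerivAt u (w z) z
  hasDerivAt_w : ∀ z, HasDerivAt w (A (u z) + B (u z) * w z) z
  isPeriodic : IsPeriodicSol u w
  deterministic : ∀ s t, u s = u t → w s = w t → ∀ z, u (s + z) = u (t + z) ∧ w (s + z) = w (t + z)
  force_ne_zero : ∀ z, w z = 0 → A (u z) ≠ 0

/-- A passage of `(u, w)` through the upper half-plane, from its entrance at time `s` to its exit at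
time `t`. -/
structure UpperPassage (A u w : ℝ → ℝ) (s t : ℝ) : Prop where
  lt : s < t
  pos : ∀ z ∈ Ioo s t, 0 < w z
  left_eq_zero : w s = 0
  right_eq_zero : w t = 0
  force_left_pos : 0 < A (u s)
  force_right_neg : A (u t) < 0

variable {A B B₁ B₂ u w u₁ w₁ u₂ w₂ : ℝ → ℝ} {p s t s' t' : ℝ}

namespace LienardCycle

lemma of_contDiffOn {U : Set ℝ} (hU : IsOpen U) (hA : ContDiffOn ℝ 1 A U)
    (hB : ContDiffOn ℝ 1 B U) (hu : ∀ z, HasDerivAt u (w z) z)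
    (hw : ∀ z, HasDerivAt w (A (u z) + B (u z) * w z) z) (huU : ∀ z, u z ∈ U)
    (hper : IsPeriodicSol u w) (hnc : Nonconst u w) : LienardCycle A B u w := by
  set v : ℝ × ℝ → ℝ × ℝ := fun x => (x.2, A x.1 + B x.1 * x.2)
  set γ : ℝ → ℝ × ℝ := fun z => (u z, w z)
  have hγ : IsIntegralCurve γ fun _ => v := fun z => (hu z).prodMk (hw z)
  have hv : ∀ z, ContDiffAt ℝ 1 v (γ z) := fun z =>
    contDiffAt_snd.prodMk (((hA.contDiffAt (hU.mem_nhds (huU z))).comp (γ z) contDiffAt_fst).add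
      (((hB.contDiffAt (hU.mem_nhds (huU z))).comp (γ z) contDiffAt_fst).mul contDiffAt_snd))
  refine ⟨hu, hw, hper, fun s t hust hwst z => ?_, fun z₀ hz₀ hAz₀ => ?_⟩
  · have heq := eq_of_isIntegralCurve_of_contDiffAt (fun z => hv (z + s)) (hγ.comp_add s)
      (hγ.comp_add t) (t₀ := 0) (by simp [γ, hust, hwst])
    simpa [γ, add_comm z] using congrFun heq z
  · have heq := eq_of_isIntegralCurve_of_contDiffAt hv hγ
      (isIntegralCurve_const (x := γ z₀) fun _ => by simp [v, γ, hz₀, hAz₀]) (t₀ := z₀) rfl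
    obtain ⟨z, hz⟩ := hnc
    have hconst : γ z = γ 0 := by rw [heq]
    simp only [γ, Prod.mk.injEq] at hconst
    exact hz.elim (· hconst.1) (· hconst.2)

lemma continuous_u (h : LienardCycle A B u w) : Continuous u :=
  continuous_iff_continuousAt.2 fun z => (h.hasDerivAt_u z).continuousAt

lemma continuous_w (h : LienardCycle A B u w) : Continuous w :=
  continuous_iff_continuousAt.2 fun z => (h.hasDerivAt_w z).continuousAt

lemma neg (h : LienardCycle A B u w) :
    LienardCycle (fun x => -A (-x)) (fun x => B (-x)) (fun z => -u z) (fun z => -w z) where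
  hasDerivAt_u z := (h.hasDerivAt_u z).neg
  hasDerivAt_w z := by
    refine (h.hasDerivAt_w z).neg.congr_deriv ?_
    simp only [neg_neg]
    ring
  isPeriodic := by
    obtain ⟨Z, hZ, hper⟩ := h.isPeriodic
    exact ⟨Z, hZ, fun z => by simpa only [neg_inj] using hper z⟩
  deterministic s t hu hw z := by
    simpa only [neg_inj] using h.deterministic s t (neg_injective hu) (neg_injective hw) z
  force_ne_zero z hz := by simpa using h.force_ne_zero z (neg_eq_zero.1 hz)

lemma reverse (h : LienardCycle A B u w) :
    LienardCycle (fun x => -A (-x)) (fun x => -B (-x)) (fun z => -u (-z)) (fun z => w (-z)) where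
  hasDerivAt_u z := by
    refine ((h.hasDerivAt_u (-z)).comp z (hasDerivAt_neg z)).neg.congr_deriv ?_
    ring
  hasDerivAt_w z := by
    refine ((h.hasDerivAt_w (-z)).comp z (hasDerivAt_neg z)).congr_deriv ?_
    simp only [neg_neg]
    ring
  isPeriodic := by
    obtain ⟨Z, hZ, hper⟩ := h.isPeriodic
    refine ⟨Z, hZ, fun z => ?_⟩
    have := hper (-(z + Z))
    rw [neg_add_rev, neg_add_cancel_comm, ← neg_add_rev] at this
    exact ⟨congrArg Neg.neg this.1.symm, this.2.symm⟩
  deterministic s t hu hw z := by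
    simpa only [neg_inj, neg_add] using h.deterministic (-s) (-t) (neg_injective hu) hw (-z)
  force_ne_zero z hz := by simpa using h.force_ne_zero (-z) hz

lemma exists_upperPassage_of_pos (h : LienardCycle A B u w) (hs : w s = 0) (hA : 0 < A (u s)) :
    ∃ t, UpperPassage A u w s t := by
  have hderiv : ∀ {z}, w z = 0 → HasDerivAt w (A (u z)) z := fun {z} hz => by
    simpa only [hz, mul_zero, add_zero] using h.hasDerivAt_w z
  have hpos : ∀ᶠ z in 𝓝[>] s, 0 < w z := by
    filter_upwards [nhdsWithin_le_nhds (eventually_nhdsWithin_sign_eq_of_deriv_pos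
      ((hderiv hs).deriv ▸ hA) hs), self_mem_nhdsWithin] with z hsign hz
    rwa [sign_pos (sub_pos.2 hz), sign_eq_one_iff] at hsign
  obtain ⟨Z, hZ, hper⟩ := h.isPeriodic
  obtain ⟨t, hst, ht, hw⟩ := exists_first_zero h.continuous_w (lt_add_of_pos_right s hZ) hpos
    ((hper s).2.trans hs).le
  refine ⟨t, hst, hw, hs, ht, hA, lt_of_le_of_ne ?_ (h.force_ne_zero t ht)⟩
  exact nonpos_of_hasDerivAt_of_le_left (hderiv ht) hst fun z hz => ht.trans_le (hw z hz).le

lemma exists_upperPassage_of_neg (h : LienardCycle A B u w) (ht : w t = 0) (hA : A (u t) < 0) :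
    ∃ s, UpperPassage A u w s t := by
  obtain ⟨s, hs⟩ := h.reverse.exists_upperPassage_of_pos (s := -t) (by simpa using ht)
    (by simpa using hA)
  refine ⟨-s, neg_lt.1 hs.lt, fun z hz => ?_, hs.right_eq_zero, ht, ?_, hA⟩
  · simpa using hs.pos (-z) ⟨neg_lt_neg hz.2, neg_lt.1 hz.1⟩
  · simpa using hs.force_right_neg

lemma strictMonoOn (h : LienardCycle A B u w) (hst : UpperPassage A u w s t) :
    StrictMonoOn u (Icc s t) := by
  refine strictMonoOn_of_deriv_pos (convex_Icc s t) h.continuous_u.continuousOn fun z hz => ?_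
  rw [interior_Icc] at hz
  exact (h.hasDerivAt_u z).deriv ▸ hst.pos z hz

lemma lt_of_upperPassage (h : LienardCycle A B u w) (hst : UpperPassage A u w s t) : u s < u t :=
  h.strictMonoOn hst (left_mem_Icc.2 hst.lt.le) (right_mem_Icc.2 hst.lt.le) hst.lt

lemma image_Icc (h : LienardCycle A B u w) (hst : UpperPassage A u w s t) :
    u '' Icc s t = Icc (u s) (u t) := by
  refine Subset.antisymm ?_ (intermediate_value_Icc hst.lt.le h.continuous_u.continuousOn)
  rintro _ ⟨z, hz, rfl⟩
  exact ⟨(h.strictMonoOn hst).monotoneOn (left_mem_Icc.2 hst.lt.le) hz hz.1,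
    (h.strictMonoOn hst).monotoneOn hz (right_mem_Icc.2 hst.lt.le) hz.2⟩

lemma exists_phaseCurve (h : LienardCycle A B u w) (hst : UpperPassage A u w s t) :
    ∃ W, PhaseCurve A B W (u s) (u t) ∧ ∀ z ∈ Icc s t, W (u z) = w z := by
  have hmono := h.strictMonoOn hst
  set ζ := Function.invFunOn u (Icc s t)
  have hζ : ∀ z ∈ Icc s t, ζ (u z) = z := fun z hz => hmono.injOn.leftInvOn_invFunOn hz
  have hζ_cont : ContinuousOn ζ (Icc (u s) (u t)) := h.image_Icc hst ▸
    continuousOn_invFunOn_image isCompact_Icc h.continuous_u.continuousOn hmono.injOn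
  have hs := hζ s (left_mem_Icc.2 hst.lt.le)
  have ht := hζ t (right_mem_Icc.2 hst.lt.le)
  have hmem : ∀ x ∈ Ioo (u s) (u t), ∃ z ∈ Ioo s t, u z = x := fun x hx =>
    intermediate_value_Ioo hst.lt.le h.continuous_u.continuousOn hx
  refine ⟨w ∘ ζ, ⟨h.lt_of_upperPassage hst, h.continuous_w.comp_continuousOn hζ_cont,
    by simp only [Function.comp_apply, hs, hst.left_eq_zero],
    by simp only [Function.comp_apply, ht, hst.right_eq_zero], fun x hx => ?_, fun x hx => ?_⟩,
    fun z hz => congrArg w (hζ z hz)⟩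
  · obtain ⟨z, hz, rfl⟩ := hmem x hx
    simpa only [Function.comp_apply, hζ z (Ioo_subset_Icc_self hz)] using hst.pos z hz
  · have hnhds : Icc (u s) (u t) ∈ 𝓝 x := Icc_mem_nhds hx.1 hx.2
    obtain ⟨z, hz, rfl⟩ := hmem x hx
    have hζz := hζ z (Ioo_subset_Icc_self hz)
    have hζ_deriv : HasDerivAt ζ (w z)⁻¹ (u z) := by
      refine HasDerivAt.of_local_left_inverse (hζ_cont.continuousAt hnhds)
        (by rw [hζz]; exact h.hasDerivAt_u z) (hst.pos z hz).ne' ?_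
      filter_upwards [hnhds] with y hy
      exact Function.invFunOn_eq ((h.image_Icc hst).ge hy)
    have hw_deriv : HasDerivAt w (A (u z) + B (u z) * w z) (ζ (u z)) := by
      rw [hζz]
      exact h.hasDerivAt_w z
    refine (hw_deriv.comp (u z) hζ_deriv).congr_deriv ?_
    rw [Function.comp_apply, hζz]
    field_simp [(hst.pos z hz).ne']

/-- The two arcs would otherwise cross, and from the crossing point on they would be the same
trajectory and hence leave the upper half-plane at the same point. -/
lemma right_le_of_upperPassage (h : LienardCycle A B u w) (hst : UpperPassage A u w s t)
    (hst' : UpperPassage A u w s' t') (hs : u s ≤ u s') (hs' : u s' < u t) : u t' ≤ u t := by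
  by_contra! hlt
  obtain ⟨W, hW, hWu⟩ := h.exists_phaseCurve hst
  obtain ⟨W', hW', hWu'⟩ := h.exists_phaseCurve hst'
  obtain ⟨x, hx, hWx⟩ : ∃ x ∈ Icc (u s') (u t), W' x - W x = 0 :=
    intermediate_value_Icc hs'.le ((hW'.continuousOn.mono (Icc_subset_Icc_right hlt.le)).sub
      (hW.continuousOn.mono (Icc_subset_Icc_left hs)))
      ⟨by simpa only [Pi.sub_apply, hW'.left_eq_zero, zero_sub, neg_nonpos]
          using hW.nonneg ⟨hs, hs'.le⟩,
        by simpa only [Pi.sub_apply, hW.right_eq_zero, sub_zero] using hW'.nonneg ⟨hs'.le, hlt.le⟩⟩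
  have hxt : x < u t := by
    refine lt_of_le_of_ne hx.2 fun hxt => (hW'.pos (u t) ⟨hs', hlt⟩).ne' ?_
    rwa [hxt, hW.right_eq_zero, sub_zero] at hWx
  obtain ⟨z, hz, rfl⟩ := (h.image_Icc hst).ge ⟨hs.trans hx.1, hx.2⟩
  obtain ⟨z', hz', hzz'⟩ := (h.image_Icc hst').ge ⟨hx.1, hx.2.trans hlt.le⟩
  have hwz : w z = w z' := by rw [← hWu z hz, ← hWu' z' hz', hzz', sub_eq_zero.1 hWx]
  have hztime : z < t := lt_of_le_of_ne hz.2 fun hzt => hxt.ne (congrArg u hzt)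
  have hztime' : z' < t' := lt_of_le_of_ne hz'.2 fun hzt => (hxt.trans hlt).ne (hzt ▸ hzz'.symm)
  have hflow := h.deterministic z z' hzz'.symm hwz
  have hle : t' - z' ≤ t - z := by
    by_contra! hlt_time
    refine (hst'.pos (z' + (t - z)) ⟨by linarith [hz'.1], by linarith⟩).ne' ?_
    rw [← (hflow _).2, add_sub_cancel, hst.right_eq_zero]
  have hge : t - z ≤ t' - z' := by
    by_contra! hlt_time
    refine (hst.pos (z + (t' - z')) ⟨by linarith [hz.1], by linarith⟩).ne' ?_
    rw [(hflow _).2, add_sub_cancel, hst'.right_eq_zero]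
  have huu := (hflow (t - z)).1
  rw [add_sub_cancel, le_antisymm hge hle, add_sub_cancel] at huu
  exact hlt.ne huu

lemma exists_isMin (h : LienardCycle A B u w) :
    ∃ s, (∀ z, u s ≤ u z) ∧ w s = 0 ∧ 0 < A (u s) := by
  obtain ⟨Z, hZ, hper⟩ := h.isPeriodic
  obtain ⟨_, ⟨s, rfl⟩, hleast⟩ := (Function.Periodic.compact_of_continuous (fun z => (hper z).1)
    hZ.ne' h.continuous_u).exists_isLeast (range_nonempty u)
  have hmin : ∀ z, u s ≤ u z := fun z => hleast ⟨z, rfl⟩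
  have hs : w s = 0 := IsLocalMin.hasDerivAt_eq_zero (Eventually.of_forall hmin) (h.hasDerivAt_u s)
  refine ⟨s, hmin, hs, not_le.1 fun hA => ?_⟩
  obtain ⟨r, hr⟩ := h.exists_upperPassage_of_neg hs (lt_of_le_of_ne hA (h.force_ne_zero s hs))
  exact (h.lt_of_upperPassage hr).not_ge (hmin r)

lemma exists_isMax (h : LienardCycle A B u w) :
    ∃ t, (∀ z, u z ≤ u t) ∧ w t = 0 ∧ A (u t) < 0 := by
  obtain ⟨t, hmax, ht, hA⟩ := h.neg.exists_isMin
  exact ⟨t, fun z => neg_le_neg_iff.1 (hmax z), neg_eq_zero.1 ht, by simpa using hA⟩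

lemma exists_range_subset_Icc (h : LienardCycle A B u w) :
    ∃ s t, u s < u t ∧ range u ⊆ Icc (u s) (u t) ∧ 0 < A (u s) ∧ A (u t) < 0 := by
  obtain ⟨s, hmin, hs, hAs⟩ := h.exists_isMin
  obtain ⟨t, hmax, -, hAt⟩ := h.exists_isMax
  obtain ⟨r, hr⟩ := h.exists_upperPassage_of_pos hs hAs
  refine ⟨s, t, (h.lt_of_upperPassage hr).trans_le (hmax r), ?_, hAs, hAt⟩
  rintro _ ⟨z, rfl⟩
  exact ⟨hmin z, hmax z⟩

lemma exists_upperPassage_isMax (h : LienardCycle A B u w)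
    (hA : CrossesDownOn A p (range u)) (hmin : ∀ z, u s ≤ u z) (hs : w s = 0)
    (hAs : 0 < A (u s)) : ∃ t, UpperPassage A u w s t ∧ ∀ z, u z ≤ u t := by
  obtain ⟨t, hst⟩ := h.exists_upperPassage_of_pos hs hAs
  obtain ⟨t', hmax, ht', hAt'⟩ := h.exists_isMax
  obtain ⟨s', hst'⟩ := h.exists_upperPassage_of_neg ht' hAt'
  have hs't : u s' < u t := (hA.lt_of_pos ⟨s', rfl⟩ hst'.force_left_pos).trans
    (hA.lt_of_neg ⟨t, rfl⟩ hst.force_right_neg)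
  exact ⟨t, hst, fun z => (hmax z).trans (h.right_le_of_upperPassage hst hst' (hmin s') hs't)⟩

lemma turning_value_eq_or_eq (h : LienardCycle A B u w) {r : ℝ} (hst : ∀ z ∈ Ioo s t, 0 < w z)
    (htr : ∀ z ∈ Ioo t r, w z < 0) (hsr : s < r) (hu : u s = u r) (hw : w s = w r) {z : ℝ}
    (hz : w z = 0) : u z = u s ∨ u z = u t := by
  have hper : Function.Periodic (fun z => (u z, w z)) (r - s) := fun z => by
    have heq := h.deterministic r s hu.symm hw.symm (z - s)
    rw [add_sub_cancel, show r + (z - s) = z + (r - s) by ring] at heq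
    exact Prod.ext heq.1 heq.2
  obtain ⟨y, hy, hzy⟩ := hper.exists_mem_Ico (sub_pos.2 hsr) z s
  obtain ⟨huy, hwy⟩ := Prod.ext_iff.1 hzy
  simp only at huy hwy
  rw [add_sub_cancel] at hy
  rw [huy]
  have hwy0 : w y = 0 := hwy.symm.trans hz
  rcases eq_or_lt_of_le hy.1 with rfl | hsy
  · exact Or.inl rfl
  rcases lt_trichotomy y t with hyt | rfl | hty
  · exact absurd hwy0 (hst y ⟨hsy, hyt⟩).ne'
  · exact Or.inr rfl
  · exact absurd hwy0 (htr y ⟨hty, hy.2⟩).ne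

theorem exists_closedPhaseCurve (h : LienardCycle A B u w) (hA : CrossesDownOn A p (range u)) :
    ∃ s t, ClosedPhaseCurve A B (u s) (u t) ∧ p ∈ Ioo (u s) (u t) ∧
      ∀ z, w z = 0 → u z = u s ∨ u z = u t := by
  obtain ⟨s, hmin, hs, hAs⟩ := h.exists_isMin
  obtain ⟨t, hst, hmax⟩ := h.exists_upperPassage_isMax hA hmin hs hAs
  have hA_neg : CrossesDownOn (fun x => -A (-x)) (-p) (range fun z => -u z) := by
    refine hA.reflect.mono ?_
    rintro _ ⟨z, rfl⟩
    exact ⟨z, (neg_neg _).symm⟩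
  obtain ⟨r, htr, hmin'⟩ := h.neg.exists_upperPassage_isMax hA_neg
    (fun z => neg_le_neg (hmax z)) (neg_eq_zero.2 hst.right_eq_zero)
    (by simpa using hst.force_right_neg)
  have hsr : u s = u r := le_antisymm (hmin r) (neg_le_neg_iff.1 (hmin' s))
  obtain ⟨W, hW, -⟩ := h.exists_phaseCurve hst
  obtain ⟨L, hL, -⟩ := h.neg.exists_phaseCurve htr
  refine ⟨s, t, ⟨⟨W, hW⟩, L, hsr ▸ hL⟩, ⟨hA.lt_of_pos ⟨s, rfl⟩ hAs,
    hA.lt_of_neg ⟨t, rfl⟩ hst.force_right_neg⟩, fun z hz => ?_⟩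
  exact h.turning_value_eq_or_eq hst.pos (fun z hz => neg_pos.1 (htr.pos z hz))
    (hst.lt.trans htr.lt) hsr (hs.trans (neg_eq_zero.1 htr.right_eq_zero).symm) hz

theorem turning_value_ne {S : Set ℝ} [S.OrdConnected] (h₁ : LienardCycle A B₁ u₁ w₁)
    (h₂ : LienardCycle A B₂ u₂ w₂) (hA : CrossesDownOn A p S) (hB : ∀ x ∈ S, B₁ x < B₂ x)
    (hu₁ : range u₁ ⊆ S) (hu₂ : range u₂ ⊆ S) {z₁ z₂ : ℝ} (hz₁ : w₁ z₁ = 0) (hz₂ : w₂ z₂ = 0) :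
    u₁ z₁ ≠ u₂ z₂ := by
  intro heq
  obtain ⟨s₁, t₁, hc₁, hp₁, hturn₁⟩ := h₁.exists_closedPhaseCurve (hA.mono hu₁)
  obtain ⟨s₂, t₂, hc₂, hp₂, hturn₂⟩ := h₂.exists_closedPhaseCurve (hA.mono hu₂)
  have hS : Ioo (u₁ s₁) (u₁ t₁) ⊆ S :=
    Ioo_subset_Icc_self.trans (OrdConnected.out ‹_› (hu₁ ⟨s₁, rfl⟩) (hu₁ ⟨t₁, rfl⟩))
  obtain ⟨hright, hleft⟩ := hc₁.nested hc₂ hp₁ hp₂ (hA.mono hS) fun x hx => hB x (hS hx)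
  rcases hturn₁ z₁ hz₁ with hz₁ | hz₁ <;> rcases hturn₂ z₂ hz₂ with hz₂ | hz₂ <;>
    rw [hz₁, hz₂] at heq
  · exact (hleft (hright heq.ge).le).ne' heq
  · exact (hp₁.1.trans hp₂.2).ne heq
  · exact (hp₂.1.trans hp₁.2).ne' heq
  · exact (hright (hleft heq.le).le).ne heq

end LienardCycle

end Lienard

section OptimalVelocity

variable {V V' V'' : ℝ → ℝ} {UM K c K₁ : ℝ} {uMx umx : ℝ → ℝ}

lemma A1.hasDerivAt (h : A1 V V' V'' UM) {x : ℝ} (hx : 0 < x) : HasDerivAt V (V' x) x :=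
  (h.1 x hx.le).hasDerivAt (Ici_mem_nhds hx)

lemma A1.deriv_pos (h : A1 V V' V'' UM) {x : ℝ} (hx : 0 < x) : 0 < V' x :=
  h.2.2.2.2.1 x hx

lemma A1.UM_pos (h : A1 V V' V'' UM) : 0 < UM :=
  h.2.2.2.2.2.2.2.1

lemma A1.deriv_le_deriv_UM (h : A1 V V' V'' UM) {x : ℝ} (hx : 0 < x) : V' x ≤ V' UM :=
  h.2.2.2.2.2.2.2.2.1 x hx

lemma A1.continuousOn (h : A1 V V' V'' UM) : ContinuousOn V (Ici 0) :=
  fun x hx => (h.1 x hx).continuousWithinAt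

lemma A1.continuousOn_fTV (h : A1 V V' V'' UM) (K c : ℝ) : ContinuousOn (fTV V K c) (Ici 0) :=
  (((continuousOn_const.mul continuousOn_id).sub h.continuousOn).sub continuousOn_const).div_const K

lemma A1.hasDerivAt_fTV (h : A1 V V' V'' UM) (K c : ℝ) {x : ℝ} (hx : 0 < x) :
    HasDerivAt (fTV V K c) (fdTV V' K x) x := by
  refine (((((hasDerivAt_id x).const_mul K).sub (h.hasDerivAt hx)).sub_const c).div_const
    K).congr_deriv ?_
  rw [mul_one, fdTV]

lemma fTV_pos_iff (hK : 0 < K) {x : ℝ} : 0 < fTV V K c x ↔ c < K * x - V x := by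
  rw [fTV, div_pos_iff_of_pos_right hK, sub_pos]

lemma fTV_neg_iff (hK : 0 < K) {x : ℝ} : fTV V K c x < 0 ↔ K * x - V x < c := by
  rw [fTV, div_lt_iff₀ hK, zero_mul, sub_neg]

/-- `V'` has no interior local minimum on `(0, ∞)`, its only critical point being a maximum. -/
lemma A1.min_le_deriv (h : A1 V V' V'' UM) {x y z : ℝ} (hx : 0 ≤ x) (hxy : x ≤ y) (hyz : y ≤ z) :
    min (V' x) (V' z) ≤ V' y := by
  have ⟨_, hV'_cont, hV'', _, _, _, _, _, _, hcrit⟩ := h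
  by_contra! hlt
  obtain ⟨hyx, hyz'⟩ := lt_min_iff.1 hlt
  obtain ⟨m, hm, hmin⟩ := isCompact_Icc.exists_isMinOn_mem_subset (s := Ioo x z)
    (hV'_cont.mono fun t ht => hx.trans ht.1) ⟨hxy, hyz⟩ fun t ht => by
      rw [Icc_sdiff_Ioo_same (hxy.trans hyz)] at ht
      rcases ht with rfl | rfl
      exacts [hyx, hyz']
  have hm_pos : 0 < m := hx.trans_lt hm.1
  have hm_eq : m = UM := (hcrit m hm_pos).1
    ((hmin.isLocalMin (Icc_mem_nhds hm.1 hm.2)).hasDerivAt_eq_zero (hV'' m hm_pos))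
  have hzm : V' z ≤ V' m := hm_eq ▸ h.deriv_le_deriv_UM (hm_pos.trans hm.2)
  exact (hzm.trans (hmin ⟨hxy, hyz⟩)).not_gt hyz'

lemma A1.exists_sub_deriv_mul (h : A1 V V' V'' UM) (K : ℝ) {x y : ℝ} (hx : 0 ≤ x) (hxy : x < y) :
    ∃ ξ ∈ Ioo x y, (K - V' ξ) * (y - x) = K * y - V y - (K * x - V x) := by
  obtain ⟨ξ, hξ, hslope⟩ := exists_hasDerivAt_eq_slope V V' hxy
    (h.continuousOn.mono fun t ht => hx.trans ht.1) fun t ht => h.hasDerivAt (hx.trans_lt ht.1)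
  refine ⟨ξ, hξ, ?_⟩
  rw [eq_div_iff (sub_pos.2 hxy).ne'] at hslope
  linarith

lemma A1.exists_lt_deriv (h : A1 V V' V'' UM) {x y : ℝ} (hx : 0 ≤ x) (hxy : x < y)
    (hlt : K * y - V y < K * x - V x) : ∃ ξ ∈ Ioo x y, K < V' ξ := by
  obtain ⟨ξ, hξ, heq⟩ := h.exists_sub_deriv_mul K hx hxy
  exact ⟨ξ, hξ, sub_neg.1 (neg_of_mul_neg_left (heq.trans_lt (sub_neg.2 hlt))
    (sub_pos.2 hxy).le)⟩

lemma A1.exists_deriv_lt (h : A1 V V' V'' UM) {x y : ℝ} (hx : 0 ≤ x) (hxy : x < y)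
    (hlt : K * x - V x < K * y - V y) : ∃ ξ ∈ Ioo x y, V' ξ < K := by
  obtain ⟨ξ, hξ, heq⟩ := h.exists_sub_deriv_mul K hx hxy
  exact ⟨ξ, hξ, sub_pos.1 (pos_of_mul_pos_left ((sub_pos.2 hlt).trans_eq heq.symm)
    (sub_pos.2 hxy).le)⟩

lemma A1.pos_of_fTV_pos_of_fTV_neg (h : A1 V V' V'' UM) (hK : K ≠ 0) {a b : ℝ} (ha : 0 ≤ a)
    (hab : a < b) (hfa : 0 < fTV V K c a) (hfb : fTV V K c b < 0) : 0 < K := by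
  refine hK.lt_or_gt.resolve_left fun hK_neg => ?_
  have hφa : K * a - V a - c < 0 := by
    simpa only [zero_mul] using (lt_div_iff_of_neg hK_neg).1 hfa
  have hφb : 0 < K * b - V b - c := by
    simpa only [zero_mul] using (div_lt_iff_of_neg hK_neg).1 hfb
  obtain ⟨ξ, hξ, hξK⟩ := h.exists_deriv_lt (K := K) ha hab (by linarith)
  exact (h.deriv_pos (ha.trans_lt hξ.1)).not_gt (hξK.trans hK_neg)

lemma A1.not_lt_of_valley (h : A1 V V' V'' UM) {a x y b : ℝ} (ha : 0 ≤ a) (hax : a < x)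
    (hxy : x < y) (hyb : y < b) (hdown : K * x - V x < K * a - V a)
    (hup : K * x - V x < K * y - V y) : ¬ K * b - V b < K * y - V y := by
  intro hdown'
  obtain ⟨ξ, hξ, hKξ⟩ := h.exists_lt_deriv ha hax hdown
  obtain ⟨η, hη, hηK⟩ := h.exists_deriv_lt (ha.trans hax.le) hxy hup
  obtain ⟨ζ, hζ, hKζ⟩ := h.exists_lt_deriv (ha.trans (hax.trans hxy).le) hyb hdown'
  have hmin := h.min_le_deriv (ha.trans hξ.1.le) (hξ.2.trans hη.1).le (hη.2.trans hζ.1).le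
  exact (lt_min hKξ hKζ).not_ge (hmin.trans hηK.le)

lemma A1.exists_crossesDownOn_fTV (h : A1 V V' V'' UM) (hK : K ≠ 0) {a b : ℝ} (ha : 0 ≤ a)
    (hab : a < b) (hfa : 0 < fTV V K c a) (hfb : fTV V K c b < 0) :
    ∃ p, CrossesDownOn (fTV V K c) p (Icc a b) := by
  have hK_pos := h.pos_of_fTV_pos_of_fTV_neg hK ha hab hfa hfb
  obtain ⟨p, ⟨hap, hpb⟩, hfp⟩ := intermediate_value_Ioo' hab.le
    ((h.continuousOn_fTV K c).mono fun x hx => ha.trans hx.1) ⟨hfb, hfa⟩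
  have hφp : K * p - V p = c := by
    simpa only [fTV, div_eq_zero_iff, hK, or_false, sub_eq_zero] using hfp
  rw [fTV_pos_iff hK_pos] at hfa
  rw [fTV_neg_iff hK_pos] at hfb
  refine ⟨p, fun x hx => ⟨fun hxp => ?_, fun hpx => ?_⟩⟩
  · by_contra! hfx
    rw [fTV_neg_iff hK_pos] at hfx
    have hax : a < x := lt_of_le_of_ne hx.1 (by rintro rfl; exact hfx.asymm hfa)
    have hxp' : x < p := lt_of_le_of_ne hxp (by rintro rfl; exact hfx.ne hφp)
    exact h.not_lt_of_valley ha hax hxp' hpb (hfx.trans hfa) (hfx.trans_eq hφp.symm)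
      (hfb.trans_eq hφp.symm)
  · by_contra! hfx
    rw [fTV_pos_iff hK_pos] at hfx
    have hxb : x < b := lt_of_le_of_ne hx.2 (by rintro rfl; exact hfx.asymm hfb)
    have hpx' : p < x := lt_of_le_of_ne hpx (by rintro rfl; exact hfx.ne' hφp)
    exact h.not_lt_of_valley ha hap hpx' hxb (hφp.trans_lt hfa) (hφp.trans_lt hfx) (hfb.trans hfx)

lemma A1.cmf_le (h : A1 V V' V'' UM) (humx : UMinHyp V' UM umx) (hK : 0 < K) {ξ b : ℝ}
    (hξ : 0 < ξ) (hKξ : K < V' ξ) (hξb : ξ ≤ b) : cmf V umx K ≤ K * b - V b := by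
  have hKM : K < V' UM := hKξ.trans_le (h.deriv_le_deriv_UM hξ)
  obtain ⟨hUm, hVm⟩ := humx K hK hKM
  by_contra! hlt
  rcases lt_trichotomy b (umx K) with hbm | rfl | hmb
  · obtain ⟨η, hη, hηK⟩ := h.exists_deriv_lt (hξ.le.trans hξb) hbm hlt
    have hmin := h.min_le_deriv hξ.le (hξb.trans hη.1.le) hη.2.le
    exact (le_min hKξ.le hVm.ge).not_gt (hmin.trans_lt hηK)
  · exact hlt.false
  · obtain ⟨η, hη, hKη⟩ := h.exists_lt_deriv (h.UM_pos.trans hUm).le hmb hlt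
    have hmin := h.min_le_deriv h.UM_pos.le hUm.le hη.1.le
    exact (lt_min hKM hKη).not_ge (hmin.trans_eq hVm)

lemma A1.mul_sub_le_of_le_deriv (h : A1 V V' V'' UM) {ξ a p : ℝ} (ha : 0 ≤ a) (haξ : a ≤ ξ)
    (hKξ : K < V' ξ) (hp : 0 ≤ p) (hKp : K ≤ V' p) (hleft : a < p → p ≤ UM ∧ V' p = K) :
    K * a - V a ≤ K * p - V p := by
  by_contra! hlt
  rcases lt_trichotomy a p with hap | rfl | hpa
  · obtain ⟨hpUM, hVp⟩ := hleft hap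
    obtain ⟨η, hη, hKη⟩ := h.exists_lt_deriv ha hap hlt
    have hmin := h.min_le_deriv (ha.trans hη.1.le) hη.2.le hpUM
    have hKM : K < V' UM := hKη.trans_le (h.deriv_le_deriv_UM (ha.trans_lt hη.1))
    exact (lt_min hKη hKM).not_ge (hmin.trans_eq hVp)
  · exact hlt.false
  · obtain ⟨η, hη, hηK⟩ := h.exists_deriv_lt hp hpa hlt
    have hmin := h.min_le_deriv hp hη.1.le (hη.2.le.trans haξ)
    exact (le_min hKp hKξ.le).not_gt (hmin.trans_lt hηK)

theorem A1.mem_D1_union_D2 (h : A1 V V' V'' UM) (hK : K ≠ 0) (huMx : UMaxHyp V' UM uMx)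
    (humx : UMinHyp V' UM umx) (hK₁ : K1Hyp V V' UM umx K₁) {a b : ℝ} (ha : 0 ≤ a) (hab : a < b)
    (hfa : 0 < fTV V K c a) (hfb : fTV V K c b < 0) :
    (K, c) ∈ D1 V V' UM uMx umx ∪ D2 V V' umx K₁ := by
  have hK_pos := h.pos_of_fTV_pos_of_fTV_neg hK ha hab hfa hfb
  rw [fTV_pos_iff hK_pos] at hfa
  rw [fTV_neg_iff hK_pos] at hfb
  obtain ⟨ξ, hξ, hKξ⟩ := h.exists_lt_deriv ha hab (hfb.trans hfa)
  have hξ_pos : 0 < ξ := ha.trans_lt hξ.1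
  have hKM : K < V' UM := hKξ.trans_le (h.deriv_le_deriv_UM hξ_pos)
  have hcm : cmf V umx K < c := (h.cmf_le humx hK_pos hξ_pos hKξ hξ.2.le).trans_lt hfb
  have hcM : V' 0 < K → c < cMf V uMx K := fun hVK => by
    obtain ⟨hp, hVp⟩ := huMx K hVK hKM
    exact hfa.trans_le (h.mul_sub_le_of_le_deriv ha hξ.1.le hKξ hp.1.le hVp.ge
      fun _ => ⟨hp.2.le, hVp⟩)
  have hV0 : c0v V ≤ c → V' 0 < K := fun hc => by
    by_contra! hKV
    have hle := h.mul_sub_le_of_le_deriv ha hξ.1.le hKξ le_rfl hKV fun hlt => absurd hlt ha.not_gt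
    rw [mul_zero, zero_sub] at hle
    exact (hc.trans_lt (hfa.trans_le hle)).false
  have hKK₁ : c ≤ c0v V → K < K₁ := fun hc => by
    by_contra! hK₁K
    rcases hK₁K.eq_or_lt with rfl | hlt
    · exact (hcm.trans_le hc).ne hK₁.2.2.2.1
    · exact (hcm.trans_le hc).asymm (hK₁.2.2.2.2 K hlt hKM)
  rcases lt_trichotomy c (c0v V) with hc | hc | hc
  · exact Or.inr (Or.inr ⟨hK_pos, hKK₁ hc.le, hcm, hc⟩)
  · exact Or.inr (Or.inl ⟨hV0 hc.ge, hKK₁ hc.le, hc⟩)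
  · exact Or.inl ⟨hV0 hc.le, hKM, max_lt hc hcm, hcM (hV0 hc.le)⟩

end OptimalVelocity

section TravelingWaves

variable {V V' V'' κ u w u₁ w₁ u₂ w₂ : ℝ → ℝ} {UM τ K c μ μ₁ μ₂ : ℝ}

/-- A nonconstant periodic solution of (TV) with positive first component. -/
structure IsPositiveCycle (V V' κ : ℝ → ℝ) (τ K c μ : ℝ) (u w : ℝ → ℝ) : Prop where
  isTVSol : IsTVSol V V' κ τ K c μ u w
  pos : ∀ z, 0 < u z
  isPeriodic : IsPeriodicSol u w
  nonconst : Nonconst u w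

lemma A2.pos_one_div (h : A2 κ) {x : ℝ} (hx : 0 < x) : 0 < κ (1 / x) :=
  h.2 _ (one_div_pos.2 hx)

lemma g1TV_pos (h : A2 κ) (hτ : 0 < τ) {x : ℝ} (hx : 0 < x) : 0 < g1TV κ τ x :=
  one_div_pos.2 (mul_pos hτ (h.pos_one_div hx))

lemma g2TV_pos (h : A2 κ) (hτ : 0 < τ) {x : ℝ} (hx : 0 < x) : 0 < g2TV κ τ x :=
  div_pos hx (mul_pos (mul_pos two_pos hτ) (h.pos_one_div hx))

lemma A2.contDiffOn_one_div (h : A2 κ) : ContDiffOn ℝ 1 (fun x => κ (1 / x)) (Ioi 0) :=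
  h.1.comp (contDiffOn_const.div contDiffOn_id fun _ hx => ne_of_gt hx) fun _ hx =>
    mem_Ioi.2 (one_div_pos.2 hx)

lemma contDiffOn_g1TV (h : A2 κ) (hτ : 0 < τ) : ContDiffOn ℝ 1 (g1TV κ τ) (Ioi 0) :=
  contDiffOn_const.div (contDiffOn_const.mul h.contDiffOn_one_div) fun _ hx =>
    (mul_pos hτ (h.pos_one_div hx)).ne'

lemma contDiffOn_g2TV (h : A2 κ) (hτ : 0 < τ) : ContDiffOn ℝ 1 (g2TV κ τ) (Ioi 0) :=
  contDiffOn_id.div (contDiffOn_const.mul h.contDiffOn_one_div) fun _ hx =>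
    (mul_pos (mul_pos two_pos hτ) (h.pos_one_div hx)).ne'

lemma A1.contDiffOn_fTV (h : A1 V V' V'' UM) : ContDiffOn ℝ 1 (fTV V K c) (Ioi 0) :=
  contDiffOn_one_of_hasDerivAt isOpen_Ioi (fun _ hx => h.hasDerivAt_fTV K c hx)
    ((continuousOn_const.sub (h.2.1.mono Ioi_subset_Ici_self)).div_const K)

lemma A1.contDiffOn_hTV (h : A1 V V' V'' UM) : ContDiffOn ℝ 1 (hTV V' K μ) (Ioi 0) :=
  ((contDiffOn_const.sub (contDiffOn_one_of_hasDerivAt isOpen_Ioi h.2.2.1 h.2.2.2.1)).div_const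
    K).add contDiffOn_const

namespace IsPositiveCycle

theorem lienardCycle (h : IsPositiveCycle V V' κ τ K c μ u w) (hA1 : A1 V V' V'' UM)
    (hA2 : A2 κ) (hτ : 0 < τ) :
    LienardCycle (fun x => g1TV κ τ x * fTV V K c x) (fun x => g2TV κ τ x * hTV V' K μ x) u w :=
  .of_contDiffOn isOpen_Ioi ((contDiffOn_g1TV hA2 hτ).mul hA1.contDiffOn_fTV)
    ((contDiffOn_g2TV hA2 hτ).mul hA1.contDiffOn_hTV) h.isTVSol.1 h.isTVSol.2 h.pos h.isPeriodic
    h.nonconst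

lemma exists_range_subset_Icc (h : IsPositiveCycle V V' κ τ K c μ u w) (hA1 : A1 V V' V'' UM)
    (hA2 : A2 κ) (hτ : 0 < τ) :
    ∃ a b, 0 < a ∧ a < b ∧ range u ⊆ Icc a b ∧ 0 < fTV V K c a ∧ fTV V K c b < 0 := by
  obtain ⟨s, t, hst, hu, hs, ht⟩ := (h.lienardCycle hA1 hA2 hτ).exists_range_subset_Icc
  exact ⟨u s, u t, h.pos s, hst, hu, (mul_pos_iff_of_pos_left (g1TV_pos hA2 hτ (h.pos s))).1 hs,
    neg_of_mul_neg_right ht (g1TV_pos hA2 hτ (h.pos t)).le⟩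

theorem turning_value_ne (hA1 : A1 V V' V'' UM) (hA2 : A2 κ) (hτ : 0 < τ) (hK : K ≠ 0)
    (h₁ : IsPositiveCycle V V' κ τ K c μ₁ u₁ w₁) (h₂ : IsPositiveCycle V V' κ τ K c μ₂ u₂ w₂)
    (hμ : μ₁ < μ₂) {z₁ z₂ : ℝ} (hz₁ : w₁ z₁ = 0) (hz₂ : w₂ z₂ = 0) : u₁ z₁ ≠ u₂ z₂ := by
  obtain ⟨a₁, b₁, ha₁, hab₁, hu₁, hfa₁, hfb₁⟩ := h₁.exists_range_subset_Icc hA1 hA2 hτ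
  obtain ⟨a₂, b₂, ha₂, -, hu₂, hfa₂, hfb₂⟩ := h₂.exists_range_subset_Icc hA1 hA2 hτ
  have ha : 0 < min a₁ a₂ := lt_min ha₁ ha₂
  have hfa : 0 < fTV V K c (min a₁ a₂) := by rcases min_choice a₁ a₂ with h | h <;> rwa [h]
  have hfb : fTV V K c (max b₁ b₂) < 0 := by rcases max_choice b₁ b₂ with h | h <;> rwa [h]
  obtain ⟨p, hp⟩ := hA1.exists_crossesDownOn_fTV hK ha.le
    ((min_le_left _ _).trans_lt (hab₁.trans_le (le_max_left _ _))) hfa hfb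
  have hpos : ∀ x ∈ Icc (min a₁ a₂) (max b₁ b₂), 0 < x := fun x hx => ha.trans_le hx.1
  refine (h₁.lienardCycle hA1 hA2 hτ).turning_value_ne (h₂.lienardCycle hA1 hA2 hτ) (p := p)
    (S := Icc (min a₁ a₂) (max b₁ b₂)) (fun x hx => ?_) (fun x hx => ?_)
    (hu₁.trans (Icc_subset_Icc (min_le_left _ _) (le_max_left _ _)))
    (hu₂.trans (Icc_subset_Icc (min_le_right _ _) (le_max_right _ _))) hz₁ hz₂
  · have hg₁ := (g1TV_pos hA2 hτ (hpos x hx)).le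
    exact ⟨fun hxp => mul_nonneg hg₁ ((hp x hx).1 hxp),
      fun hpx => mul_nonpos_of_nonneg_of_nonpos hg₁ ((hp x hx).2 hpx)⟩
  · exact mul_lt_mul_of_pos_left (add_lt_add_right hμ _) (g2TV_pos hA2 hτ (hpos x hx))

end IsPositiveCycle

end TravelingWaves

theorem stmt7_general {V V' V'' κ : ℝ → ℝ} {τ UM K c K₁ : ℝ} {uMx umx : ℝ → ℝ}
    (hA1 : A1 V V' V'' UM) (hA2 : A2 κ) (hτ : 0 < τ) (hK : K ≠ 0)
    (huMx : UMaxHyp V' UM uMx) (humx : UMinHyp V' UM umx) (hK1 : K1Hyp V V' UM umx K₁) :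
    (∀ μ u w, IsPositiveCycle V V' κ τ K c μ u w →
      (K, c) ∈ D1 V V' UM uMx umx ∪ D2 V V' umx K₁) ∧
    (∀ μ₁ μ₂ u₁ w₁ u₂ w₂, IsPositiveCycle V V' κ τ K c μ₁ u₁ w₁ →
      IsPositiveCycle V V' κ τ K c μ₂ u₂ w₂ →
      ∀ z₁ z₂, w₁ z₁ = 0 → w₂ z₂ = 0 → u₁ z₁ = u₂ z₂ → μ₁ = μ₂) := by
  refine ⟨fun μ u w h => ?_, fun μ₁ μ₂ u₁ w₁ u₂ w₂ h₁ h₂ z₁ z₂ hz₁ hz₂ hu => ?_⟩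
  · obtain ⟨a, b, ha, hab, -, hfa, hfb⟩ := h.exists_range_subset_Icc hA1 hA2 hτ
    exact hA1.mem_D1_union_D2 hK huMx humx hK1 ha.le hab hfa hfb
  · by_contra hμ
    rcases lt_or_gt_of_ne hμ with hlt | hgt
    · exact h₁.turning_value_ne hA1 hA2 hτ hK h₂ hlt hz₁ hz₂ hu
    · exact h₂.turning_value_ne hA1 hA2 hτ hK h₁ hgt hz₂ hz₁ hu.symm

theorem stmt7
    (V V' V'' κ : ℝ → ℝ) (τ UM K c K₁ : ℝ) (uMx umx : ℝ → ℝ)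
    (hA1 : A1 V V' V'' UM) (hA2 : A2 κ) (hτ : 0 < τ) (hK : K ≠ 0)
    (huMx : UMaxHyp V' UM uMx) (humx : UMinHyp V' UM umx)
    (hK1 : K1Hyp V V' UM umx K₁)
    (u0 u2 q μper : ℝ) (Adm : Set ℝ) :
    ((K, c) ∉ D1 V V' UM uMx umx ∪ D2 V V' umx K₁ →
      ∀ μ : ℝ, ¬ ∃ u w : ℝ → ℝ, IsTVSol V V' κ τ K c μ u w ∧ (∀ z, 0 < u z) ∧
        IsPeriodicSol u w ∧ Nonconst u w) ∧
    (CondC V' κ UM K₁ K →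
      (
        ((K, c) ∈ D1 V V' UM uMx umx ∧
          ∃ u1 μb μf, ZerosD1 V K c u1 u0 u2 ∧
            (∀ μ, HasHE1 V V' κ τ K c μ u1 u2 ↔ μ = μb) ∧
            (∀ μ, HasHE2 V V' κ τ K c μ u1 u2 ↔ μ = μf) ∧
            ((μf ≤ μb ∧ Adm = Ioo u1 u0) ∨ (μb < μf ∧ Adm = Ioo u0 u2))) ∨
        ((K, c) ∈ D2 V V' umx K₁ ∧ ZerosD2 V K c u0 u2 ∧ Adm = Ioo u0 u2)) →
      q ∈ Adm →
      (∃ u w : ℝ → ℝ, IsTVSol V V' κ τ K c μper u w ∧ (∀ z, 0 < u z) ∧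
        u 0 = q ∧ w 0 = 0 ∧ IsPeriodicSol u w ∧ Nonconst u w) →
      ∀ μ : ℝ, μ ≠ μper →
        ¬ ∃ u w : ℝ → ℝ, IsTVSol V V' κ τ K c μ u w ∧ (∀ z, 0 < u z) ∧
          u 0 = q ∧ w 0 = 0 ∧ IsPeriodicSol u w ∧ Nonconst u w) :=
  have ⟨hregion, hunique⟩ := stmt7_general (c := c) hA1 hA2 hτ hK huMx humx hK1
  ⟨fun hKc _ ⟨_, _, hs, hpos, hper, hnc⟩ => hKc (hregion _ _ _ ⟨hs, hpos, hper, hnc⟩),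
    fun _ _ _ ⟨_, _, hs, hpos, hu, hw, hper, hnc⟩ _ hμ ⟨_, _, hs', hpos', hu', hw', hper', hnc'⟩ =>
      hμ (hunique _ _ _ _ _ _ ⟨hs', hpos', hper', hnc'⟩ ⟨hs, hpos, hper, hnc⟩ 0 0 hw' hw
        (hu'.trans hu.symm))⟩

end TrafficTW
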